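/- Fix an integer N ≥ −1 and scalars D_1, …, D_{N+1} ∈ K. For each integer i ≥ 1 define the R-linear endomorphism of P (the polynomial ring over R = K[ℏ] in the variables x^1, x^2, x^3, …): H_i = ℏ ∂_i + (ℏ²/2) Σ_{a,b ≥ 1, a+b = i+N} ∂_a ∂_b + (ℏ/2) Σ_{a ≥ max(1, i+N)} (2a − 2i − 2N + 1) x^{a−i−N+1} ∂_a + (1/8)(x^1)² [N = −1][i = 1] + (ℏ/16) [i = 1−N] + ℏ D_i [i ≤ N+1]. (These are the Virasoro operators of the Z₂-twisted Fock representation of the free boson vertex operator algebra after the dilaton shift; for N = −1 they are the Virasoro constraints annihilating the Kontsevich–Witten tau-function, and for N = 0 with D_1 = 0 those annihilating the Brézin–Gross–Witten tau-function.) Then for all integers i, j ≥ 1: [H_i, H_j] = ℏ (i − j) H_{i+j+N−1}. -/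

import Mathlib

/-!
Statement 6: the Z₂-twisted free-boson Virasoro operators (after dilaton shift)
`H_i = ℏ ∂_i + (ℏ²/2) Σ_{a,b≥1, a+b=i+N} ∂_a ∂_b
       + (ℏ/2) Σ_{a ≥ max(1,i+N)} (2a−2i−2N+1) x^{a−i−N+1} ∂_a
       + (1/8)(x¹)² [N=−1][i=1] + (ℏ/16) [i=1−N] + ℏ D_i [i ≤ N+1]`
acting on `P = K[ℏ][x¹, x², x³, …]` satisfy `[H_i, H_j] = ℏ (i−j) H_{i+j+N−1}`.
-/

noncomputable section

open MvPolynomial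

/-- The carrier: polynomials over `R = K[ℏ]` in variables `x^1, x^2, x^3, …`. -/
abbrev BosonSpace (K : Type) [Field K] := MvPolynomial ℕ+ (Polynomial K)

variable (K : Type) [Field K] [CharZero K]

/-- `ℏ`, as an element of `P` (acting by multiplication). -/
def hbar : BosonSpace K := MvPolynomial.C Polynomial.X

/-- A scalar `c : K`, as an element of `P`. -/
def cst (c : K) : BosonSpace K := MvPolynomial.C (Polynomial.C c)

/-- `∂_a` for `a ∈ ℤ`, with the convention that it vanishes for `a < 1`. -/
def Dop (a : ℤ) (p : BosonSpace K) : BosonSpace K :=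
  if h : 1 ≤ a then MvPolynomial.pderiv (⟨a.toNat, by omega⟩ : ℕ+) p else 0

/-- Multiplication by `x^a` for `a ∈ ℤ`, with the convention that it vanishes for `a < 1`. -/
def Xop (a : ℤ) (p : BosonSpace K) : BosonSpace K :=
  if h : 1 ≤ a then (MvPolynomial.X (⟨a.toNat, by omega⟩ : ℕ+) : BosonSpace K) * p else 0

/-- The twisted Virasoro operator
`H_i = ℏ ∂_i + (ℏ²/2) Σ_{a,b≥1, a+b=i+N} ∂_a ∂_b
       + (ℏ/2) Σ_{a ≥ max(1,i+N)} (2a−2i−2N+1) x^{a−i−N+1} ∂_a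
       + (1/8)(x¹)² [N=−1][i=1] + (ℏ/16) [i=1−N] + ℏ D_i [i ≤ N+1]`. -/
def Hop (N : ℤ) (D : ℤ → K) (i : ℤ) (p : BosonSpace K) : BosonSpace K :=
  hbar K * Dop K i p
    + cst K ((2 : K)⁻¹) * hbar K ^ 2 * (∑ᶠ a : ℤ, Dop K a (Dop K (i + N - a) p))
    + cst K ((2 : K)⁻¹) * hbar K *
        (∑ᶠ a : ℤ, ((2 * a - 2 * i - 2 * N + 1 : ℤ) : BosonSpace K) *
          Xop K (a - i - N + 1) (Dop K a p))
    + (if N = -1 ∧ i = 1 then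
        cst K ((8 : K)⁻¹) * (MvPolynomial.X (1 : ℕ+) : BosonSpace K) ^ 2 * p else 0)
    + (if i = 1 - N then cst K ((16 : K)⁻¹) * hbar K * p else 0)
    + (if i ≤ N + 1 then hbar K * cst K (D i) * p else 0)

/-!
Write `L_s` for the part of `H_i`, `s = i + N`, that remains without the dilaton shift `ℏ ∂_i` and
the scalar `ℏ D_i`. The modes `α_m`, equal to `2ℏ ∂_m` for `m ≥ 1` and to `(1 - 2m) x^{1-m}` for
`m ≤ 0`, satisfy `[L_s, α_m] = (ℏ/2) (1 - 2m) α_{m+s-1}`. By the Jacobi identity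
`[L_s, L_t] - ℏ (s - t) L_{s+t-1}` then commutes with multiplication by every variable, so it is
multiplication by its value at `1`, and it vanishes as soon as that value does; this is what fixes
the constants `1/8` and `1/16`. Since `ℏ ∂_i = α_i / 2`, the terms that the dilaton shift adds to
`[L_s, L_t]` are again modes and sum to `(ℏ/2) (i - j) α_{i+j+N-1}`. The scalars `ℏ D_i` are
central, and `D_{i+j+N-1}` could only occur for `i = j = 1`, where both sides are zero.
-/

attribute [local instance] LieRing.ofAssociativeRing

section General

variable {σ R : Type*} [CommRing R]

lemma lie_mulLeft_of_derivation {A : Type*} [CommRing A] [Algebra R A] (D : Derivation R A A)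
    (f : A) : ⁅(D : Module.End R A), LinearMap.mulLeft R f⁆ = LinearMap.mulLeft R (D f) := by
  ext g
  simp [Ring.lie_def, mul_comm g]

lemma lie_mulLeft_mulLeft {A : Type*} [CommRing A] [Algebra R A] (f g : A) :
    ⁅LinearMap.mulLeft R f, LinearMap.mulLeft R g⁆ = 0 := by
  ext h
  simp [Ring.lie_def, mul_left_comm f]

lemma mulLeft_smul {A : Type*} [CommRing A] [Algebra R A] (c : R) (f : A) :
    LinearMap.mulLeft R (c • f) = c • LinearMap.mulLeft R f :=
  (LinearMap.mul R A).map_smul c f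

lemma mul_lie_eq {A : Type*} [Ring A] (a b c : A) : ⁅a * b, c⁆ = a * ⁅b, c⁆ + ⁅a, c⁆ * b := by
  simp only [Ring.lie_def]
  noncomm_ring

-- At `M = MvPolynomial σ R`, unification with the library's `smul_lie` and `lie_smul` fails.
lemma end_smul_lie {M : Type*} [AddCommGroup M] [Module R M] (c : R) (S T : Module.End R M) :
    ⁅c • S, T⁆ = c • ⁅S, T⁆ :=
  smul_lie c S T

lemma end_lie_smul {M : Type*} [AddCommGroup M] [Module R M] (c : R) (S T : Module.End R M) :
    ⁅S, c • T⁆ = c • ⁅S, T⁆ :=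
  lie_smul c S T

lemma lie_add_smul_one_add_smul_one {M : Type*} [AddCommGroup M] [Module R M]
    (S T : Module.End R M) (c d : R) : ⁅S + c • 1, T + d • 1⁆ = ⁅S, T⁆ := by
  simp only [Ring.lie_def, add_mul, mul_add, smul_mul_assoc, mul_smul_comm, one_mul, mul_one,
    smul_add, smul_comm c d]
  abel

lemma end_eq_zero_of_lie_mulLeft_X {T : Module.End R (MvPolynomial σ R)}
    (hX : ∀ a, ⁅T, LinearMap.mulLeft R (X a : MvPolynomial σ R)⁆ = 0) (h1 : T 1 = 0) : T = 0 := by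
  refine LinearMap.ext fun p => ?_
  induction p using MvPolynomial.induction_on with
  | C r => rw [C_eq_smul_one, map_smul, h1, smul_zero, LinearMap.zero_apply]
  | add p q hp hq => simpa using congrArg₂ (· + ·) hp hq
  | mul_X p a hp =>
    have hcomm := LinearMap.congr_fun (hX a) p
    simp only [Ring.lie_def, LinearMap.sub_apply, Module.End.mul_apply, LinearMap.mulLeft_apply,
      hp, LinearMap.zero_apply, mul_zero, sub_zero] at hcomm
    rw [mul_comm, hcomm, LinearMap.zero_apply]

lemma finsum_mul_pderiv (f : σ → MvPolynomial σ R) (p : MvPolynomial σ R) :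
    ∑ᶠ a, f a * pderiv a p = mkDerivation R f p := by
  classical
  have hsupp : Function.support (fun a => f a * pderiv a p) ⊆ p.vars := fun a ha => by
    by_contra hmem
    exact ha (by simp [pderiv_eq_zero_of_notMem_vars hmem])
  have happly (q : MvPolynomial σ R) : (∑ a ∈ p.vars, f a • pderiv a : Derivation R _ _) q =
      ∑ a ∈ p.vars, f a * pderiv a q := by
    simp only [← Derivation.coeFnAddMonoidHom_apply, map_sum, Finset.sum_apply]
    rfl
  rw [finsum_eq_sum_of_support_subset _ hsupp, ← happly]
  refine derivation_eq_of_forall_mem_vars fun b hb => ?_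
  simp [happly, pderiv_X, Pi.single_apply, hb]

end General

/-- The Fock space of the twisted free boson over `R`, with `X a` standing for `x^a`, `a ≥ 1`. -/
abbrev TwistedFock (R : Type*) [CommRing R] := MvPolynomial ℕ+ R

namespace TwistedFock

variable {R : Type*} [CommRing R]

variable (R) in
/-- The coordinate `x^a`, extended by zero to `a ≤ 0` so that sums and commutators over integer
indices need no case distinction. -/
def coord (a : ℤ) : TwistedFock R := if 1 ≤ a then X a.toNat.toPNat' else 0

variable (R) in
/-- The partial derivative `∂_a`, extended by zero to `a ≤ 0`. -/
def coordDeriv (a : ℤ) : Derivation R (TwistedFock R) (TwistedFock R) :=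
  if 1 ≤ a then pderiv a.toNat.toPNat' else 0

lemma coord_of_nonpos {a : ℤ} (ha : a ≤ 0) : coord R a = 0 := if_neg (by lia)

lemma coordDeriv_of_nonpos {a : ℤ} (ha : a ≤ 0) : coordDeriv R a = 0 := if_neg (by lia)

@[simp]
lemma coord_pnat (a : ℕ+) : coord R (a : ℤ) = X a := by
  simp [coord]

@[simp]
lemma coordDeriv_pnat (a : ℕ+) : coordDeriv R (a : ℤ) = pderiv a := by
  simp [coordDeriv]

lemma coordDeriv_coord (a : ℤ) {b : ℤ} (hb : 1 ≤ b) :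
    coordDeriv R a (coord R b) = if a = b then 1 else 0 := by
  lift b to ℕ+ using hb
  rcases le_or_gt a 0 with ha | ha
  · rw [coordDeriv_of_nonpos ha, if_neg (by have := b.pos; lia), Derivation.zero_apply]
  · lift a to ℕ+ using ha
    simp [pderiv_X, Pi.single_apply, eq_comm]

lemma finsum_mul_coordDeriv (f : ℤ → TwistedFock R) (p : TwistedFock R) :
    ∑ᶠ a : ℤ, f a * coordDeriv R a p = mkDerivation R (fun a : ℕ+ => f a) p := by
  have hinj : Function.Injective fun a : ℕ+ => (a : ℤ) :=
    Nat.cast_injective.comp PNat.coe_injective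
  have hsupp : Function.support (fun a => f a * coordDeriv R a p) ⊆
      Set.range fun a : ℕ+ => (a : ℤ) := fun a ha => by
    rcases le_or_gt a 0 with h | h
    · simp [coordDeriv_of_nonpos h] at ha
    · lift a to ℕ+ using h
      exact ⟨a, rfl⟩
  rw [← Set.indicator_eq_self.mpr hsupp, ← finsum_mem_def, finsum_mem_range hinj,
    ← finsum_mul_pderiv]
  simp only [coordDeriv_pnat]

lemma lie_coordDeriv_coordDeriv (a b : ℤ) : ⁅coordDeriv R a, coordDeriv R b⁆ = 0 := by
  ext1 c
  have hc : (1 : ℤ) ≤ c := by exact_mod_cast c.2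
  rw [← coord_pnat, Derivation.commutator_apply, coordDeriv_coord _ hc, coordDeriv_coord _ hc]
  split_ifs <;> simp

variable (R) in
/-- The vector field `Σ_a (2a - 2s + 1) x^{a-s+1} ∂_a`, the first-order part of the Virasoro
operator of index `s`. -/
def vectorField (s : ℤ) : Derivation R (TwistedFock R) (TwistedFock R) :=
  mkDerivation R fun a : ℕ+ => ((2 * a - 2 * s + 1 : ℤ) : R) • coord R (a - s + 1)

variable (R) in
/-- The operator `Σ_{a+b=s} ∂_a ∂_b`, the second-order part of the Virasoro operator of
index `s`. -/
def secondOrderPart (s : ℤ) : Module.End R (TwistedFock R) :=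
  ∑ a ∈ Finset.Icc 1 (s - 1), (coordDeriv R a).toLinearMap * (coordDeriv R (s - a)).toLinearMap

lemma vectorField_coord (s : ℤ) {k : ℤ} (hk : 1 ≤ k) :
    vectorField R s (coord R k) = ((2 * k - 2 * s + 1 : ℤ) : R) • coord R (k - s + 1) := by
  lift k to ℕ+ using hk
  simp [vectorField]

lemma lie_vectorField_coordDeriv (s : ℤ) {k : ℤ} (hk : 1 ≤ k) :
    ⁅vectorField R s, coordDeriv R k⁆ = ((1 - 2 * k : ℤ) : R) • coordDeriv R (k + s - 1) := by
  ext1 c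
  have hc : (1 : ℤ) ≤ c := by exact_mod_cast c.2
  have hconst : vectorField R s (if k = c then 1 else 0) = 0 := by split_ifs <;> simp
  rw [← coord_pnat, Derivation.commutator_apply, Derivation.smul_apply, vectorField_coord s hc,
    Derivation.map_smul, coordDeriv_coord k hc, coordDeriv_coord _ hc, hconst, zero_sub]
  rcases lt_or_ge (c - s + 1 : ℤ) 1 with h | h
  · rw [coord_of_nonpos (by lia), if_neg (by lia)]
    simp
  · rw [coordDeriv_coord k h]
    rcases eq_or_ne k (c - s + 1) with rfl | hne
    · rw [if_pos rfl, if_pos (by ring), ← neg_smul, ← Int.cast_neg]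
      congr 2
      ring
    · rw [if_neg hne, if_neg (by lia)]
      simp

lemma lie_secondOrderPart_coordDeriv (s k : ℤ) :
    ⁅secondOrderPart R s, (coordDeriv R k).toLinearMap⁆ = 0 := by
  have hcomm (a : ℤ) : ⁅(coordDeriv R a).toLinearMap, (coordDeriv R k).toLinearMap⁆ = 0 := by
    rw [← Derivation.commutator_coe_linear_map, lie_coordDeriv_coordDeriv,
      Derivation.coe_zero_linearMap]
  simp [secondOrderPart, sum_lie, mul_lie_eq, hcomm]

lemma lie_secondOrderPart_mulLeft_coord (s : ℤ) {k : ℤ} (hk : 1 ≤ k) :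
    ⁅secondOrderPart R s, LinearMap.mulLeft R (coord R k)⁆ =
      (2 : R) • (coordDeriv R (s - k)).toLinearMap := by
  have hlie (a : ℤ) : ⁅(coordDeriv R a).toLinearMap, LinearMap.mulLeft R (coord R k)⁆ =
      if a = k then 1 else 0 := by
    rw [lie_mulLeft_of_derivation, coordDeriv_coord a hk]
    split_ifs <;> simp [Module.End.one_eq_id]
  have hboundary (h : k ∉ Finset.Icc 1 (s - 1)) : (coordDeriv R (s - k)).toLinearMap = 0 := by
    rw [Finset.mem_Icc] at h
    rw [coordDeriv_of_nonpos (by lia), Derivation.coe_zero_linearMap]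
  have hmem : s - k ∈ Finset.Icc 1 (s - 1) ↔ k ∈ Finset.Icc 1 (s - 1) := by
    simp only [Finset.mem_Icc]
    lia
  simp only [secondOrderPart, sum_lie, mul_lie_eq, hlie, mul_ite, mul_one, mul_zero, ite_mul,
    one_mul, zero_mul, Finset.sum_add_distrib, show ∀ a, s - a = k ↔ a = s - k by lia,
    Finset.sum_ite_eq', hmem]
  split_ifs with h
  · rw [two_smul]
  · rw [hboundary h, add_zero, smul_zero]

variable (ℏ : R)

/-- The mode `α_m` of the twisted free boson, of energy `1/2 - m`: an annihilation
operator `2ℏ ∂_m` for `m ≥ 1` and a creation operator `(1 - 2m) x^{1-m}` for `m ≤ 0`. -/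
def mode (m : ℤ) : Module.End R (TwistedFock R) :=
  (2 * ℏ) • (coordDeriv R m).toLinearMap +
    ((1 - 2 * m : ℤ) : R) • LinearMap.mulLeft R (coord R (1 - m))

lemma mode_of_pos {m : ℤ} (hm : 1 ≤ m) : mode ℏ m = (2 * ℏ) • (coordDeriv R m).toLinearMap := by
  simp [mode, coord_of_nonpos (R := R) (show 1 - m ≤ 0 by lia)]

lemma mode_of_nonpos {m : ℤ} (hm : m ≤ 0) :
    mode ℏ m = ((1 - 2 * m : ℤ) : R) • LinearMap.mulLeft R (coord R (1 - m)) := by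
  simp [mode, coordDeriv_of_nonpos hm]

variable [Invertible (2 : R)]

/-- The zeroth-order part of the Virasoro operator of index `s ≥ 0`, which is also its value at the
vacuum `1`. -/
def vacuumValue (s : ℤ) : TwistedFock R :=
  (if s = 0 then (⅟2 ^ 3 : R) • coord R 1 ^ 2 else 0) + if s = 1 then (⅟2 ^ 4 * ℏ) • 1 else 0

/-- The Virasoro operator of index `s ≥ 0` of the twisted free boson, before the dilaton shift.
The index is one more than that of the Virasoro algebra, which starts at `-1` here. -/
def virasoro (s : ℤ) : Module.End R (TwistedFock R) :=
  (⅟2 * ℏ ^ 2) • secondOrderPart R s + (⅟2 * ℏ) • (vectorField R s).toLinearMap +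
    LinearMap.mulLeft R (vacuumValue ℏ s)

lemma virasoro_apply_one (s : ℤ) : virasoro ℏ s 1 = vacuumValue ℏ s := by
  simp [virasoro, secondOrderPart]

lemma vacuumValue_zero : vacuumValue ℏ 0 = (⅟2 ^ 3 : R) • coord R 1 ^ 2 := by
  simp [vacuumValue]

lemma vacuumValue_one : vacuumValue ℏ 1 = (⅟2 ^ 4 * ℏ) • 1 := by
  simp [vacuumValue]

lemma vacuumValue_of_two_le {s : ℤ} (hs : 2 ≤ s) : vacuumValue ℏ s = 0 := by
  rw [vacuumValue, if_neg (by lia), if_neg (by lia), add_zero]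

lemma coordDeriv_vacuumValue {s m : ℤ} (hs : 0 ≤ s) (hm : 1 ≤ m) :
    coordDeriv R m (vacuumValue ℏ s) =
      (⅟2 ^ 2 * (2 * m - 1 : ℤ) * (3 - 2 * m - 2 * s : ℤ) : R) • coord R (2 - m - s) := by
  rcases hs.eq_or_lt with rfl | hs
  · rw [vacuumValue_zero, Derivation.map_smul, Derivation.leibniz_pow, coordDeriv_coord m le_rfl]
    rcases hm.eq_or_lt with rfl | hm
    · have hhalf : (⅟2 : R) * 2 = 1 := invOf_mul_self 2
      simp only [Nat.add_one_sub_one, pow_one, if_true, smul_eq_mul, mul_one, Int.cast_one,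
        mul_zero, sub_zero, Int.reduceSub]
      linear_combination (norm := module) ((⅟2 ^ 2 : R) * hhalf) • coord R 1
    · rw [if_neg hm.ne', coord_of_nonpos (show 2 - m - 0 ≤ 0 by lia)]
      simp
  · have hconst : coordDeriv R m (vacuumValue ℏ s) = 0 := by
      rcases eq_or_ne s 1 with rfl | hs1
      · rw [vacuumValue_one, Derivation.map_smul, Derivation.map_one_eq_zero, smul_zero]
      · rw [vacuumValue_of_two_le ℏ (by lia), map_zero]
    rw [hconst, coord_of_nonpos (by lia), smul_zero]

lemma lie_virasoro_mulLeft_coord (s : ℤ) {k : ℤ} (hk : 1 ≤ k) :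
    ⁅virasoro ℏ s, LinearMap.mulLeft R (coord R k)⁆ = (⅟2 * ℏ) • mode ℏ (s - k) := by
  have hweight : 1 - 2 * (s - k) = 2 * k - 2 * s + 1 := by ring
  have hindex : 1 - (s - k) = k - s + 1 := by ring
  rw [virasoro, add_lie, add_lie, end_smul_lie, end_smul_lie,
    lie_secondOrderPart_mulLeft_coord s hk, lie_mulLeft_of_derivation, vectorField_coord s hk,
    mulLeft_smul, lie_mulLeft_mulLeft, mode, hweight, hindex]
  module

lemma lie_virasoro_coordDeriv {s m : ℤ} (hs : 0 ≤ s) (hm : 1 ≤ m) :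
    ⁅virasoro ℏ s, (coordDeriv R m).toLinearMap⁆ =
      (⅟2 ^ 2 * (1 - 2 * m : ℤ) : R) • mode ℏ (m + s - 1) := by
  have hvacuum : ⁅LinearMap.mulLeft R (vacuumValue ℏ s), (coordDeriv R m).toLinearMap⁆ =
      (⅟2 ^ 2 * (1 - 2 * m : ℤ) * (3 - 2 * m - 2 * s : ℤ) : R) •
        LinearMap.mulLeft R (coord R (2 - m - s)) := by
    rw [← lie_skew, lie_mulLeft_of_derivation, coordDeriv_vacuumValue ℏ hs hm, mulLeft_smul]
    push_cast
    module
  have hindex : 1 - (m + s - 1) = 2 - m - s := by ring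
  rw [virasoro, add_lie, add_lie, end_smul_lie, end_smul_lie, lie_secondOrderPart_coordDeriv,
    ← Derivation.commutator_coe_linear_map, lie_vectorField_coordDeriv s hm, hvacuum, mode, hindex,
    Derivation.coe_smul_linearMap]
  push_cast
  linear_combination (norm := module) (-(⅟2 * ℏ * (1 - 2 * m) : R) * invOf_mul_self (2 : R)) •
    (coordDeriv R (m + s - 1)).toLinearMap

lemma lie_virasoro_mode {s : ℤ} (hs : 0 ≤ s) (m : ℤ) :
    ⁅virasoro ℏ s, mode ℏ m⁆ = (⅟2 * ℏ * (1 - 2 * m : ℤ)) • mode ℏ (m + s - 1) := by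
  rcases le_or_gt m 0 with hm | hm
  · rw [mode_of_nonpos ℏ hm, end_lie_smul, lie_virasoro_mulLeft_coord ℏ s (by lia), smul_smul,
      mul_comm, show s - (1 - m) = m + s - 1 by ring]
  · rw [mode_of_pos ℏ hm, end_lie_smul, lie_virasoro_coordDeriv ℏ hs hm, smul_smul]
    congr 1
    linear_combination ⅟2 * ℏ * (1 - 2 * m : ℤ) * invOf_mul_self (2 : R)

lemma lie_lie_virasoro_virasoro_mulLeft_coord {s t : ℤ} (hs : 0 ≤ s) (ht : 0 ≤ t) {k : ℤ}
    (hk : 1 ≤ k) :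
    ⁅⁅virasoro ℏ s, virasoro ℏ t⁆, LinearMap.mulLeft R (coord R k)⁆ =
      (ℏ * (s - t : ℤ)) • ⁅virasoro ℏ (s + t - 1), LinearMap.mulLeft R (coord R k)⁆ := by
  rw [lie_lie, lie_virasoro_mulLeft_coord ℏ t hk, lie_virasoro_mulLeft_coord ℏ s hk,
    lie_virasoro_mulLeft_coord ℏ _ hk, end_lie_smul, end_lie_smul, lie_virasoro_mode ℏ hs,
    lie_virasoro_mode ℏ ht, show t - k + s - 1 = s + t - 1 - k by ring,
    show s - k + t - 1 = s + t - 1 - k by ring, smul_smul, smul_smul, smul_smul, ← sub_smul]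
  congr 1
  push_cast
  linear_combination ⅟2 * ℏ ^ 2 * (s - t) * invOf_mul_self (2 : R)

lemma virasoro_coord_mul (s : ℤ) {k : ℤ} (hk : 1 ≤ k) (q : TwistedFock R) :
    virasoro ℏ s (coord R k * q) =
      coord R k * virasoro ℏ s q + (⅟2 * ℏ) • mode ℏ (s - k) q := by
  have hlie := LinearMap.congr_fun (lie_virasoro_mulLeft_coord ℏ s hk) q
  simp only [Ring.lie_def, LinearMap.sub_apply, Module.End.mul_apply, LinearMap.mulLeft_apply,
    LinearMap.smul_apply] at hlie
  linear_combination hlie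

lemma virasoro_coord_one_sq (s : ℤ) :
    virasoro ℏ s (coord R 1 ^ 2) = (if s = 2 then ℏ ^ 2 • 1 else 0) +
      (ℏ * (3 - 2 * s : ℤ)) • (coord R (2 - s) * coord R 1) + vacuumValue ℏ s * coord R 1 ^ 2 := by
  have hderiv : coordDeriv R (s - 1) (coord R 1) = if s = 2 then 1 else 0 := by
    rw [coordDeriv_coord _ le_rfl]
    simp only [show s - 1 = 1 ↔ s = 2 by lia]
  have hmode : mode ℏ (s - 1) = (2 * ℏ) • (coordDeriv R (s - 1)).toLinearMap +
      ((3 - 2 * s : ℤ) : R) • LinearMap.mulLeft R (coord R (2 - s)) := by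
    rw [mode, show 1 - 2 * (s - 1) = 3 - 2 * s by ring, show 1 - (s - 1) = 2 - s by ring]
  generalize ((3 - 2 * s : ℤ) : R) = w at hmode ⊢
  have hhalf : (C ⅟2 * 2 : TwistedFock R) = 1 := by
    rw [← map_ofNat C 2, ← C_mul, invOf_mul_self, C_1]
  have hsingle : virasoro ℏ s (coord R 1) =
      coord R 1 * vacuumValue ℏ s + (⅟2 * ℏ * w) • coord R (2 - s) := by
    rw [← mul_one (coord R 1), virasoro_coord_mul ℏ s le_rfl, virasoro_apply_one, hmode]
    simp [smul_smul]
  rw [sq, virasoro_coord_mul ℏ s le_rfl, hsingle, hmode]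
  simp only [LinearMap.add_apply, LinearMap.smul_apply, Derivation.coeFn_coe, hderiv,
    LinearMap.mulLeft_apply, smul_eq_C_mul, map_mul, map_pow, map_ofNat]
  split_ifs
  · linear_combination (C ℏ ^ 2 + C ℏ * C w * coord R (2 - s) * coord R 1) * hhalf
  · linear_combination C ℏ * C w * coord R (2 - s) * coord R 1 * hhalf

lemma virasoro_vacuumValue_zero_sub {s : ℤ} (hs : 1 ≤ s) :
    virasoro ℏ s (vacuumValue ℏ 0) - virasoro ℏ 0 (vacuumValue ℏ s) =
      (ℏ * s) • vacuumValue ℏ (s - 1) := by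
  rw [vacuumValue_zero, map_smul, virasoro_coord_one_sq]
  obtain rfl | rfl | hs : s = 1 ∨ s = 2 ∨ 3 ≤ s := by lia
  · simp only [vacuumValue_one, vacuumValue_zero, virasoro_apply_one, map_smul, smul_add,
      OfNat.one_ne_ofNat, ↓reduceIte, mul_one, Int.reduceSub, Int.cast_one, zero_add, sub_self, sq,
      Algebra.smul_mul_assoc, one_mul]
    module
  · simp only [vacuumValue_of_two_le, vacuumValue_one, coord_of_nonpos, ↓reduceIte, le_refl,
      Int.reduceSub, sub_self, zero_mul, smul_zero, add_zero, map_zero, sub_zero, Int.cast_ofNat]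
    linear_combination (norm := module)
      (-(⅟2 ^ 3 * ℏ ^ 2 : R) * invOf_mul_self (2 : R)) • (1 : TwistedFock R)
  · rw [coord_of_nonpos (by lia), vacuumValue_of_two_le ℏ (by lia),
      vacuumValue_of_two_le ℏ (by lia), if_neg (by lia)]
    simp

lemma virasoro_vacuumValue_sub_of_pos {s t : ℤ} (hs : 1 ≤ s) (ht : 1 ≤ t) :
    virasoro ℏ s (vacuumValue ℏ t) - virasoro ℏ t (vacuumValue ℏ s) = 0 := by
  rcases hs.eq_or_lt with rfl | hs <;> rcases ht.eq_or_lt with rfl | ht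
  · exact sub_self _
  · simp [vacuumValue_of_two_le ℏ ht, vacuumValue_one, virasoro_apply_one]
  · simp [vacuumValue_of_two_le ℏ hs, vacuumValue_one, virasoro_apply_one]
  · simp [vacuumValue_of_two_le ℏ hs, vacuumValue_of_two_le ℏ ht]

lemma virasoro_vacuumValue_sub {s t : ℤ} (hs : 0 ≤ s) (ht : 0 ≤ t) :
    virasoro ℏ s (vacuumValue ℏ t) - virasoro ℏ t (vacuumValue ℏ s) =
      (ℏ * (s - t : ℤ)) • vacuumValue ℏ (s + t - 1) := by
  wlog hts : t ≤ s generalizing s t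
  · rw [← neg_sub, this ht hs (by lia), add_comm t, ← neg_smul]
    congr 1
    push_cast
    ring
  obtain rfl | ht : t = 0 ∨ 1 ≤ t := by lia
  · obtain rfl | hs : s = 0 ∨ 1 ≤ s := by lia
    · simp
    · simpa using virasoro_vacuumValue_zero_sub ℏ hs
  · rw [virasoro_vacuumValue_sub_of_pos ℏ (ht.trans hts) ht]
    obtain rfl | hlt : t = s ∨ t < s := by lia
    · simp
    · rw [vacuumValue_of_two_le ℏ (by lia), smul_zero]

lemma lie_virasoro_virasoro {s t : ℤ} (hs : 0 ≤ s) (ht : 0 ≤ t) :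
    ⁅virasoro ℏ s, virasoro ℏ t⁆ = (ℏ * (s - t : ℤ)) • virasoro ℏ (s + t - 1) := by
  refine sub_eq_zero.mp (end_eq_zero_of_lie_mulLeft_X (fun a => ?_) ?_)
  · have ha : (1 : ℤ) ≤ a := by exact_mod_cast a.2
    rw [← coord_pnat, sub_lie, end_smul_lie, lie_lie_virasoro_virasoro_mulLeft_coord ℏ hs ht ha,
      sub_self]
  · rw [LinearMap.sub_apply, Ring.lie_def]
    simp [virasoro_apply_one, virasoro_vacuumValue_sub ℏ hs ht]

/-- The operator `H_i` with coefficients in `R`: the Virasoro operator of index `i + N`, plus the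
dilaton shift `ℏ ∂_i` and the scalar `ℏ D_i [i ≤ N + 1]`. -/
def dilatonShifted (N : ℤ) (D : ℤ → R) (i : ℤ) : Module.End R (TwistedFock R) :=
  ℏ • (coordDeriv R i).toLinearMap + virasoro ℏ (i + N) + (if i ≤ N + 1 then ℏ * D i else 0) • 1

lemma smul_coordDeriv_eq_mode {i : ℤ} (hi : 1 ≤ i) :
    ℏ • (coordDeriv R i).toLinearMap = (⅟2 : R) • mode ℏ i := by
  rw [mode_of_pos ℏ hi, smul_smul, invOf_mul_cancel_left']

lemma lie_virasoro_smul_coordDeriv {s i : ℤ} (hs : 0 ≤ s) (hi : 1 ≤ i) :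
    ⁅virasoro ℏ s, ℏ • (coordDeriv R i).toLinearMap⁆ =
      (⅟2 ^ 2 * ℏ * (1 - 2 * i : ℤ)) • mode ℏ (i + s - 1) := by
  rw [smul_coordDeriv_eq_mode ℏ hi, end_lie_smul, lie_virasoro_mode ℏ hs, smul_smul]
  congr 1
  ring

lemma lie_smul_coordDeriv_add_virasoro {N i j : ℤ} (hi : 1 ≤ i) (hj : 1 ≤ j) (hiN : 0 ≤ i + N)
    (hjN : 0 ≤ j + N) (hijN : 1 ≤ i + j + N - 1) :
    ⁅ℏ • (coordDeriv R i).toLinearMap + virasoro ℏ (i + N),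
        ℏ • (coordDeriv R j).toLinearMap + virasoro ℏ (j + N)⁆ =
      (ℏ * (i - j : ℤ)) • (ℏ • (coordDeriv R (i + j + N - 1)).toLinearMap +
        virasoro ℏ (i + j + N - 1 + N)) := by
  have hcomm : ⁅ℏ • (coordDeriv R i).toLinearMap, ℏ • (coordDeriv R j).toLinearMap⁆ = 0 := by
    rw [end_smul_lie, end_lie_smul, ← Derivation.commutator_coe_linear_map,
      lie_coordDeriv_coordDeriv, Derivation.coe_zero_linearMap, smul_zero, smul_zero]
  rw [add_lie, lie_add, lie_add, hcomm, ← lie_skew _ (virasoro ℏ (j + N)),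
    lie_virasoro_smul_coordDeriv ℏ hjN hi, lie_virasoro_smul_coordDeriv ℏ hiN hj,
    lie_virasoro_virasoro ℏ hiN hjN, smul_coordDeriv_eq_mode ℏ hijN,
    show i + (j + N) - 1 = i + j + N - 1 by ring, show j + (i + N) - 1 = i + j + N - 1 by ring,
    show i + N + (j + N) - 1 = i + j + N - 1 + N by ring, add_sub_add_right_eq_sub]
  push_cast
  linear_combination (norm := module) ((⅟2 * ℏ * (i - j) : R) * invOf_mul_self (2 : R)) •
    mode ℏ (i + j + N - 1)

end TwistedFock

open TwistedFock

theorem statement6_general {R : Type*} [CommRing R] [Invertible (2 : R)] (ℏ : R) {N : ℤ}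
    (hN : -1 ≤ N) (D : ℤ → R) {i j : ℤ} (hi : 1 ≤ i) (hj : 1 ≤ j) :
    ⁅dilatonShifted ℏ N D i, dilatonShifted ℏ N D j⁆ =
      (ℏ * (i - j : ℤ)) • dilatonShifted ℏ N D (i + j + N - 1) := by
  rcases eq_or_ne i j with rfl | hij
  · rw [lie_self, sub_self, Int.cast_zero, mul_zero, zero_smul]
  · have hD : ¬ i + j + N - 1 ≤ N + 1 := by lia
    rw [dilatonShifted, dilatonShifted, lie_add_smul_one_add_smul_one,
      lie_smul_coordDeriv_add_virasoro ℏ hi hj (by lia) (by lia) (by lia), dilatonShifted,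
      if_neg hD, zero_smul, add_zero]

section Bridge

/-- Invertibility of `2` in `K[ℏ]`, with `⅟2` definitionally the constant `2⁻¹`. -/
instance invertibleTwoPolynomial : Invertible (2 : Polynomial K) where
  invOf := Polynomial.C 2⁻¹
  invOf_mul_self := by
    rw [← map_ofNat Polynomial.C 2, ← Polynomial.C_mul, inv_mul_cancel₀ two_ne_zero,
      Polynomial.C_1]
  mul_invOf_self := by
    rw [← map_ofNat Polynomial.C 2, ← Polynomial.C_mul, mul_inv_cancel₀ two_ne_zero,
      Polynomial.C_1]

omit [CharZero K] in
lemma Dop_eq_coordDeriv (a : ℤ) (p : BosonSpace K) :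
    Dop K a p = coordDeriv (Polynomial K) a p := by
  rcases le_or_gt a 0 with ha | ha
  · rw [coordDeriv_of_nonpos ha]
    exact dif_neg (by lia)
  · lift a to ℕ+ using ha
    rw [coordDeriv_pnat]
    exact dif_pos (by exact_mod_cast a.2)

omit [CharZero K] in
lemma Xop_eq_coord_mul (a : ℤ) (p : BosonSpace K) :
    Xop K a p = coord (Polynomial K) a * p := by
  rcases le_or_gt a 0 with ha | ha
  · rw [coord_of_nonpos ha, zero_mul]
    exact dif_neg (by lia)
  · lift a to ℕ+ using ha
    rw [coord_pnat]
    exact dif_pos (by exact_mod_cast a.2)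

omit [CharZero K] in
lemma finsum_Dop_Dop_eq_secondOrderPart (s : ℤ) (p : BosonSpace K) :
    ∑ᶠ a : ℤ, Dop K a (Dop K (s - a) p) = secondOrderPart (Polynomial K) s p := by
  simp only [Dop_eq_coordDeriv]
  rw [finsum_eq_sum_of_support_subset (s := Finset.Icc 1 (s - 1))]
  · simp [secondOrderPart]
  · intro a ha
    rw [Finset.coe_Icc, Set.mem_Icc]
    contrapose! ha
    rcases le_or_gt a 0 with h | h
    · simp [coordDeriv_of_nonpos h]
    · simp [coordDeriv_of_nonpos (R := Polynomial K) (show s - a ≤ 0 by lia)]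

omit [CharZero K] in
lemma finsum_Xop_Dop_eq_vectorField (i N : ℤ) (p : BosonSpace K) :
    ∑ᶠ a : ℤ, ((2 * a - 2 * i - 2 * N + 1 : ℤ) : BosonSpace K) *
        Xop K (a - i - N + 1) (Dop K a p) =
      vectorField (Polynomial K) (i + N) p := by
  have hweight (a : ℤ) : 2 * a - 2 * i - 2 * N + 1 = 2 * a - 2 * (i + N) + 1 := by ring
  simp only [Dop_eq_coordDeriv, Xop_eq_coord_mul, ← mul_assoc, hweight, sub_sub _ i N]
  rw [finsum_mul_coordDeriv fun a => ((2 * a - 2 * (i + N) + 1 : ℤ) : BosonSpace K) * _]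
  simp only [vectorField, smul_eq_C_mul, map_intCast]

lemma Hop_eq_dilatonShifted {N i : ℤ} (hi : i + N = 0 → i = 1) (D : ℤ → K) :
    Hop K N D i = dilatonShifted Polynomial.X N (fun k => Polynomial.C (D k)) i := by
  ext1 p
  have h8 : (8 : K)⁻¹ = 2⁻¹ ^ 3 := by norm_num
  have h16 : (16 : K)⁻¹ = 2⁻¹ ^ 4 := by norm_num
  have hcoord : (X 1 : BosonSpace K) = coord (Polynomial K) 1 := (coord_pnat 1).symm
  have hhalf : Polynomial.C (2⁻¹ : K) = ⅟2 := rfl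
  have hzero : (N = -1 ∧ i = 1) ↔ i + N = 0 := by lia
  have hone : i = 1 - N ↔ i + N = 1 := by lia
  rw [Hop, finsum_Dop_Dop_eq_secondOrderPart, finsum_Xop_Dop_eq_vectorField, Dop_eq_coordDeriv]
  simp only [hzero, hone, h8, h16, hcoord, cst, hbar, map_pow, hhalf, dilatonShifted, virasoro,
    vacuumValue, LinearMap.add_apply, LinearMap.smul_apply, LinearMap.mulLeft_apply,
    Derivation.coeFn_coe, Module.End.one_apply, smul_eq_C_mul, map_mul]
  split_ifs <;> simp only [C_0, C_mul] <;> ring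

end Bridge

/-- For every integer `N ≥ −1` and scalars `D_1, …, D_{N+1}`, the twisted
Virasoro operators `H_i`, `i ≥ 1` (for `N = −1` the Virasoro constraints of the
Kontsevich–Witten tau function, for `N = 0`, `D_1 = 0` those of the Brézin–Gross–Witten
tau function), satisfy `[H_i, H_j] = ℏ (i − j) H_{i+j+N−1}`. -/
theorem statement6 (N : ℤ) (hN : -1 ≤ N) (D : ℤ → K) :
    ∀ i j : ℤ, 1 ≤ i → 1 ≤ j → ∀ p : BosonSpace K,
      Hop K N D i (Hop K N D j p) - Hop K N D j (Hop K N D i p)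
        = hbar K * ((i - j : ℤ) : BosonSpace K) * Hop K N D (i + j + N - 1) p := by
  intro i j hi hj p
  rw [Hop_eq_dilatonShifted K (i := i) (by lia), Hop_eq_dilatonShifted K (i := j) (by lia),
    Hop_eq_dilatonShifted K (by lia)]
  simpa only [Ring.lie_def, LinearMap.sub_apply, Module.End.mul_apply, LinearMap.smul_apply,
    smul_eq_C_mul, map_mul, map_intCast, hbar] using LinearMap.congr_fun
      (statement6_general Polynomial.X hN (fun k => Polynomial.C (D k)) hi hj) p

end
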